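/- Let T be a decision tree for a training set (E, λ) and let w be an inner node of T whose rooted subtree contains m inner nodes. Then the tree obtained from T by the single subtree replacement operation at w can also be obtained from T by a sequence of m subtree replacement operations, each applied to an inner node both of whose children are leaves. -/

import Mathlib

/-- The two class labels. -/
inductive Label where
  | blue
  | red
deriving DecidableEq

/-- A decision tree over examples `ι → ℝ` with classes `{blue, red}`:
every inner node carries a feature and a threshold, every leaf a class label.
An example goes to the left child if its value in the node's feature is at most
the threshold, and to the right child otherwise. -/
inductive DTree (ι : Type) where
  | leaf (c : Label)
  | node (feat : ι) (thr : ℝ) (left right : DTree ι)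

namespace DTree

variable {ι : Type}

/-- The class that a decision tree assigns to an example. -/
noncomputable def classify : DTree ι → (ι → ℝ) → Label
  | .leaf c, _ => c
  | .node f t l r, e => if e f ≤ t then l.classify e else r.classify e

/-- The routing path of an example (`false` = left child, `true` = right child);
it is the position of the leaf of the example. -/
noncomputable def route : DTree ι → (ι → ℝ) → List Bool
  | .leaf _, _ => []
  | .node f t l r, e => if e f ≤ t then false :: l.route e else true :: r.route e

/-- The subtree rooted at a position (`none` if the position is not a node). -/
def subtreeAt : DTree ι → List Bool → Option (DTree ι)
  | T, [] => some T
  | .leaf _, _ :: _ => none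
  | .node _ _ l r, b :: p => (if b then r else l).subtreeAt p

/-- Replace the subtree at a given position by another tree. -/
def replaceAt : DTree ι → List Bool → DTree ι → DTree ι
  | _, [], T' => T'
  | .leaf c, _ :: _, _ => .leaf c
  | .node f t l r, b :: p, T' =>
      if b then .node f t l (r.replaceAt p T') else .node f t (l.replaceAt p T') r

/-- The number of inner nodes of a decision tree. -/
def innerCount : DTree ι → ℕ
  | .leaf _ => 0
  | .node _ _ l r => 1 + l.innerCount + r.innerCount

/-- The position `p` is an inner node of `T`. -/
def IsInnerPos (T : DTree ι) (p : List Bool) : Prop :=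
  ∃ f t l r, T.subtreeAt p = some (.node f t l r)

/-- The position `p` is a node of `T`. -/
def IsNodePos (T : DTree ι) (p : List Bool) : Prop :=
  (T.subtreeAt p).isSome

/-- The feature and threshold of the inner node at position `p`. -/
def cutAt (T : DTree ι) (p : List Bool) : Option (ι × ℝ) :=
  match T.subtreeAt p with
  | some (.node f t _ _) => some (f, t)
  | _ => none

/-- The subtree raising operation at position `q` keeping the child in direction `b`:
the subtree rooted at `q` is replaced by the subtree rooted at its `b`-child; it prunes
the node at `q` together with all inner nodes of the subtree rooted at the other child. -/
def raiseAt (T : DTree ι) (q : List Bool) (b : Bool) : DTree ι :=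
  match T.subtreeAt q with
  | some (.node _ _ l r) => T.replaceAt q (if b then r else l)
  | _ => T

end DTree

/-- `E[T,p]`: the examples of `E` whose routing through `T` passes the position `p`. -/
noncomputable def reach {ι : Type} (E : Finset (ι → ℝ)) (T : DTree ι) (p : List Bool) :
    Finset (ι → ℝ) :=
  E.filter fun e => p <+: T.route e

/-- The number of errors of `T` on the training set `(E, lab)`. -/
noncomputable def errCount {ι : Type} (T : DTree ι) (E : Finset (ι → ℝ))
    (lab : (ι → ℝ) → Label) : ℕ :=
  (E.filter fun e => T.classify e ≠ lab e).card

/-- A most frequent label of the labeled set `(E, lab)` (blue in case of a tie). -/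
def majorityLabel {ι : Type} (E : Finset (ι → ℝ)) (lab : (ι → ℝ) → Label) : Label :=
  if (E.filter fun e => lab e = Label.red).card ≤ (E.filter fun e => lab e = Label.blue).card
  then Label.blue else Label.red

/-- One subtree replacement operation: some inner node of `T` is replaced by a leaf
labeled with a most frequent label of the examples reaching it. -/
def ReplStep {ι : Type} (E : Finset (ι → ℝ)) (lab : (ι → ℝ) → Label)
    (T T' : DTree ι) : Prop :=
  ∃ p, T.IsInnerPos p ∧
    T' = T.replaceAt p (.leaf (majorityLabel (reach E T p) lab))

/-- `T` is a reasonable decision tree for `(E, lab)`: every node is reached by some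
example and every leaf carries a most frequent label of the examples reaching it. -/
def Reasonable {ι : Type} (E : Finset (ι → ℝ)) (lab : (ι → ℝ) → Label)
    (T : DTree ι) : Prop :=
  (∀ p, T.IsNodePos p → (reach E T p).Nonempty) ∧
  (∀ p c, T.subtreeAt p = some (.leaf c) → ∀ c' : Label,
    ((reach E T p).filter fun e => lab e = c').card ≤
      ((reach E T p).filter fun e => lab e = c).card)

/-- Apply a sequence of raising operations (given by positions and kept directions). -/
def applySeq {ι : Type} : DTree ι → List (List Bool × Bool) → DTree ι
  | T, [] => T
  | T, (q, b) :: rest => applySeq (T.raiseAt q b) rest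

/-- Each raising operation of the sequence is applied at an inner node. -/
def ValidSeq {ι : Type} : DTree ι → List (List Bool × Bool) → Prop
  | _, [] => True
  | T, (q, b) :: rest => T.IsInnerPos q ∧ ValidSeq (T.raiseAt q b) rest

/-- The total number of inner nodes pruned by a sequence of raising operations. -/
def seqPruned {ι : Type} : DTree ι → List (List Bool × Bool) → ℕ
  | _, [] => 0
  | T, (q, b) :: rest =>
      (match T.subtreeAt q with
        | some (.node _ _ l r) => 1 + DTree.innerCount (if b then l else r)
        | _ => 0) + seqPruned (T.raiseAt q b) rest

/-- `T'` is obtained from `T` by a (possibly empty) sequence of subtree raising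
operations. -/
def RaisedFrom {ι : Type} (T T' : DTree ι) : Prop :=
  ∃ steps, ValidSeq T steps ∧ applySeq T steps = T'

/-- `T'` is obtained from `T` by a sequence of subtree raising operations pruning
exactly `m` inner nodes in total. -/
def RaisedFromPruning {ι : Type} (T : DTree ι) (m : ℕ) (T' : DTree ι) : Prop :=
  ∃ steps, ValidSeq T steps ∧ seqPruned T steps = m ∧ applySeq T steps = T'

/-- Tracking the position of a node through one raising operation: nodes strictly
below the raised node on the discarded side, and the raised node itself, are pruned
(`none`); all other nodes survive at a possibly shifted position. -/
def stepMap (q : List Bool) (b : Bool) (p : List Bool) : Option (List Bool) :=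
  if q <+: p then
    if q ++ [b] <+: p then some (q ++ p.drop (q.length + 1)) else none
  else some p

/-- Tracking the position of a node through a sequence of raising operations. -/
def seqMap : List (List Bool × Bool) → List Bool → Option (List Bool)
  | [], p => some p
  | (q, b) :: rest, p => (stepMap q b p).bind (seqMap rest)

/-- The number of errors of `T` on a multiset of labeled examples. -/
noncomputable def errCountM {ι : Type} (T : DTree ι) (E : Multiset ((ι → ℝ) × Label)) : ℕ :=
  (E.filter fun q => T.classify q.1 ≠ q.2).card

/-- A sequence of subtree replacement operations, each applied to an inner node
both of whose children are leaves (hence each pruning exactly one inner node);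
the count is the number of operations performed. -/
inductive ReplLeafSeq {d : ℕ} (E : Finset (Fin d → ℝ)) (lab : (Fin d → ℝ) → Label) :
    DTree (Fin d) → ℕ → DTree (Fin d) → Prop
  | refl (T : DTree (Fin d)) : ReplLeafSeq E lab T 0 T
  | step {T T'' : DTree (Fin d)} {m : ℕ} (p : List Bool) (f : Fin d) (t : ℝ)
      (a b : Label) :
      T.subtreeAt p = some (.node f t (.leaf a) (.leaf b)) →
      ReplLeafSeq E lab
        (T.replaceAt p (.leaf (majorityLabel (reach E T p) lab))) m T'' →
      ReplLeafSeq E lab T (m + 1) T''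

/-! The subtree at `w` is collapsed bottom-up: first its left subtree down to a leaf, then its
right subtree, and finally `w` itself, whose children are leaves by then. The labels given to the
two intermediate leaves are irrelevant, since they disappear in the last step. Changing a tree only
at or below `w` does not affect which examples reach `w`, so the last step writes the majority
label of the original set `E[T, w]`. -/

namespace DTree

variable {ι : Type}

theorem subtreeAt_replaceAt_append {T : DTree ι} {p : List Bool} (hp : T.IsNodePos p)
    (S : DTree ι) (q : List Bool) : (T.replaceAt p S).subtreeAt (p ++ q) = S.subtreeAt q := by
  induction p generalizing T with
  | nil => simp only [replaceAt, List.nil_append]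
  | cons b p ih =>
    cases T with
    | leaf c => simp [IsNodePos, subtreeAt] at hp
    | node f t l r => cases b <;> exact ih hp

theorem subtreeAt_replaceAt {T : DTree ι} {p : List Bool} (hp : T.IsNodePos p) (S : DTree ι) :
    (T.replaceAt p S).subtreeAt p = some S := by
  simpa [subtreeAt] using subtreeAt_replaceAt_append hp S []

theorem IsNodePos.replaceAt_append {T S : DTree ι} {p q : List Bool} (hp : T.IsNodePos p)
    (hq : S.IsNodePos q) : (T.replaceAt p S).IsNodePos (p ++ q) := by
  rwa [IsNodePos, subtreeAt_replaceAt_append hp]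

theorem replaceAt_replaceAt_append (T S X : DTree ι) (p q : List Bool) :
    (T.replaceAt p S).replaceAt (p ++ q) X = T.replaceAt p (S.replaceAt q X) := by
  induction p generalizing T with
  | nil => simp only [replaceAt, List.nil_append]
  | cons b p ih => cases T <;> cases b <;> simp [replaceAt, ih]

theorem replaceAt_replaceAt (T S X : DTree ι) (p : List Bool) :
    (T.replaceAt p S).replaceAt p X = T.replaceAt p X := by
  simpa [replaceAt] using replaceAt_replaceAt_append T S X p []

theorem replaceAt_eq_self {T S : DTree ι} {p : List Bool} (h : T.subtreeAt p = some S) :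
    T.replaceAt p S = T := by
  induction p generalizing T with
  | nil => simpa [subtreeAt, replaceAt, eq_comm] using h
  | cons b p ih =>
    cases T with
    | leaf c => rfl
    | node f t l r => cases b <;> simpa [replaceAt] using ih h

theorem prefix_route_replaceAt (T S : DTree ι) (p : List Bool) (e : ι → ℝ) :
    p <+: (T.replaceAt p S).route e ↔ p <+: T.route e := by
  induction p generalizing T with
  | nil => simp only [List.nil_prefix]
  | cons b p ih =>
    cases T with
    | leaf c => rfl
    | node f t l r => cases b <;> by_cases he : e f ≤ t <;> simp [replaceAt, route, he, ih]

/-- The label of the single leaf to which a tree is collapsed when the examples `F` reach its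
root: the majority label if the root is an inner node. A leaf cannot be pruned, so it keeps its
label, whatever the majority in `F` is. -/
def collapseLabel (F : Finset (ι → ℝ)) (lab : (ι → ℝ) → Label) : DTree ι → Label
  | .leaf c => c
  | .node _ _ _ _ => majorityLabel F lab

end DTree

theorem reach_replaceAt {ι : Type} (E : Finset (ι → ℝ)) (T S : DTree ι) (p : List Bool) :
    reach E (T.replaceAt p S) p = reach E T p := by
  simp only [reach, DTree.prefix_route_replaceAt]

namespace ReplLeafSeq

open DTree

variable {d : ℕ} {E : Finset (Fin d → ℝ)} {lab : (Fin d → ℝ) → Label}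

theorem trans {T T' T'' : DTree (Fin d)} {m n : ℕ} (h : ReplLeafSeq E lab T m T')
    (h' : ReplLeafSeq E lab T' n T'') : ReplLeafSeq E lab T (m + n) T'' := by
  induction h with
  | refl => rwa [Nat.zero_add]
  | step p f t a b hp _ ih =>
    rw [Nat.add_right_comm]
    exact .step p f t a b hp (ih h')

theorem replaceAt_node_leaf_leaf {T : DTree (Fin d)} {p : List Bool} (hp : T.IsNodePos p)
    (f : Fin d) (t : ℝ) (a b : Label) :
    ReplLeafSeq E lab (T.replaceAt p (.node f t (.leaf a) (.leaf b))) 1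
      (T.replaceAt p (.leaf (majorityLabel (reach E T p) lab))) := by
  have h := step (E := E) (lab := lab) p f t a b (subtreeAt_replaceAt hp _) (.refl _)
  rwa [reach_replaceAt, replaceAt_replaceAt] at h

theorem replaceAt_collapse {T : DTree (Fin d)} {p : List Bool} (hp : T.IsNodePos p)
    (S : DTree (Fin d)) :
    ReplLeafSeq E lab (T.replaceAt p S) S.innerCount
      (T.replaceAt p (.leaf (S.collapseLabel (reach E T p) lab))) := by
  induction S generalizing T p with
  | leaf c => exact .refl _
  | node f t l r ihl ihr =>
    obtain ⟨a, left⟩ : ∃ a, ReplLeafSeq E lab (T.replaceAt p (.node f t l r)) l.innerCount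
        (T.replaceAt p (.node f t (.leaf a) r)) := by
      have h := ihl (hp.replaceAt_append (S := .node f t l r) (q := [false]) rfl)
      simp only [replaceAt_replaceAt_append, replaceAt, Bool.false_eq_true, if_false] at h
      exact ⟨_, h⟩
    obtain ⟨b, right⟩ : ∃ b, ReplLeafSeq E lab (T.replaceAt p (.node f t (.leaf a) r))
        r.innerCount (T.replaceAt p (.node f t (.leaf a) (.leaf b))) := by
      have h := ihr (hp.replaceAt_append (S := .node f t (.leaf a) r) (q := [true]) rfl)
      simp only [replaceAt_replaceAt_append, replaceAt, if_true] at h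
      exact ⟨_, h⟩
    have root := replaceAt_node_leaf_leaf (E := E) (lab := lab) hp f t a b
    have count : (node f t l r).innerCount = l.innerCount + r.innerCount + 1 := by
      simp only [innerCount]
      omega
    rw [count]
    exact (left.trans right).trans root

end ReplLeafSeq

/-- Let `T` be a decision tree for `(E, lab)` and `w` an inner
node of `T` whose rooted subtree contains `m` inner nodes. Then the tree obtained
from `T` by the single subtree replacement operation at `w` can also be obtained
from `T` by a sequence of `m` subtree replacement operations, each applied to an
inner node both of whose children are leaves. -/
theorem stmt16 {d : ℕ} (E : Finset (Fin d → ℝ)) (lab : (Fin d → ℝ) → Label)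
    (T : DTree (Fin d)) (w : List Bool) (f : Fin d) (t : ℝ) (l r : DTree (Fin d))
    (hw : T.subtreeAt w = some (.node f t l r)) :
    ReplLeafSeq E lab T ((DTree.node f t l r).innerCount)
      (T.replaceAt w (.leaf (majorityLabel (reach E T w) lab))) := by
  have hp : T.IsNodePos w := Option.isSome_of_eq_some hw
  have h := ReplLeafSeq.replaceAt_collapse (E := E) (lab := lab) hp (.node f t l r)
  rwa [DTree.replaceAt_eq_self hw] at h
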